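/- arXiv:1408.4090 — 5 statements merged into one kernel-verified Lean document; each statement's English description precedes it below -/
import Mathlib

section
/- Let n ≥ 1, let ℓ be a positive integer, and let λ = (λ₁,…,λₙ) ∈ ℝⁿ satisfy 0 ≤ λᵢ − λᵢ₊₁ ≤ 2ℓ for 1 ≤ i ≤ n−1 and 0 ≤ λₙ ≤ ℓ. Then there exist s₁,…,s_{n−1} ∈ {0,1} such that, setting μₖ = 2(sₖ + sₖ₊₁ + ⋯ + s_{n−1}) for 1 ≤ k ≤ n−1, μₙ = 0, and v = ℓμ − λ, one has |vᵢ − vⱼ| ≤ 2ℓ and |vᵢ + vⱼ| ≤ 2ℓ for all 1 ≤ i < j ≤ n, and |vᵢ| ≤ ℓ for all 1 ≤ i ≤ n. -/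
/-!
Put `xᵢ = λᵢ / (2ℓ)`, so that consecutive `xᵢ` differ by an amount in `[0, 1]` and `xₙ ∈ [0, 1/2]`.
Rounding every `xᵢ` to a nearest integer `mᵢ` gives `|ℓ(2mᵢ) - λᵢ| ≤ ℓ`, and since rounding is
monotone and commutes with adding `1`, consecutive differences `sᵢ = mᵢ - mᵢ₊₁` lie in `{0, 1}`.
Ties are rounded down so that `mₙ = 0`; hence `mᵢ = sᵢ + ⋯ + sₙ₋₁`. The bounds on `vᵢ ± vⱼ` follow
from `|vᵢ| ≤ ℓ` by the triangle inequality.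
-/

theorem exists_le_one_forall_sum_Ico_eq {a n : ℕ} {m : ℕ → ℤ}
    (hstep : ∀ k ∈ Set.Ico a n, m k - m (k + 1) ∈ Set.Icc 0 1) (hlast : m n = 0) :
    ∃ s : ℕ → ℕ, (∀ k, s k ≤ 1) ∧ ∀ i ∈ Set.Icc a n, ∑ k ∈ Finset.Ico i n, (s k : ℤ) = m i := by
  refine ⟨fun k => if m k = m (k + 1) then 0 else 1, fun k => by dsimp only; split_ifs <;> simp, ?_⟩
  rintro i ⟨hai, hin⟩
  calc ∑ k ∈ Finset.Ico i n, ((if m k = m (k + 1) then 0 else 1 : ℕ) : ℤ)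
      = ∑ k ∈ Finset.Ico i n, -(m (k + 1) - m k) := by
        refine Finset.sum_congr rfl fun k hk => ?_
        rw [Finset.mem_Ico] at hk
        obtain ⟨lower, upper⟩ := hstep k ⟨hai.trans hk.1, hk.2⟩
        split_ifs <;> omega
    _ = m i := by rw [Finset.sum_neg_distrib, Finset.sum_Ico_sub m hin, hlast]; ring

section OrderedField

variable {K : Type*} [Field K] [LinearOrder K] [IsStrictOrderedRing K] [FloorRing K]

/-- The nearest integer to `x`, with ties broken downwards, so that all of `[0, 1/2]` is sent to
`0`; Mathlib's `round` breaks ties upwards. -/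
def roundHalfDown (x : K) : ℤ := ⌈x - 1 / 2⌉

theorem abs_roundHalfDown_sub_le (x : K) : |(roundHalfDown x : K) - x| ≤ 1 / 2 := by
  have lower : x - 1 / 2 ≤ roundHalfDown x := Int.le_ceil _
  have upper : (roundHalfDown x : K) < x - 1 / 2 + 1 := Int.ceil_lt_add_one _
  rw [abs_le]
  constructor <;> linarith

theorem roundHalfDown_mono : Monotone (roundHalfDown : K → ℤ) :=
  fun _ _ hxy => Int.ceil_mono (sub_le_sub_right hxy _)

theorem roundHalfDown_add_one (x : K) : roundHalfDown (x + 1) = roundHalfDown x + 1 := by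
  rw [roundHalfDown, roundHalfDown, add_sub_right_comm, Int.ceil_add_one]

theorem roundHalfDown_eq_zero_iff {x : K} : roundHalfDown x = 0 ↔ -(1 / 2) < x ∧ x ≤ 1 / 2 := by
  rw [roundHalfDown, Int.ceil_eq_iff, Int.cast_zero]
  constructor <;> rintro ⟨lower, upper⟩ <;> constructor <;> linarith

theorem roundHalfDown_sub_mem_Icc {x y : K} (h : x - y ∈ Set.Icc 0 1) :
    roundHalfDown x - roundHalfDown y ∈ Set.Icc 0 1 := by
  have lower : roundHalfDown y ≤ roundHalfDown x := roundHalfDown_mono (sub_nonneg.1 h.1)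
  have upper : roundHalfDown x ≤ roundHalfDown y + 1 :=
    roundHalfDown_add_one y ▸ roundHalfDown_mono (sub_le_iff_le_add'.1 h.2)
  exact ⟨sub_nonneg.2 lower, sub_le_iff_le_add'.2 upper⟩

theorem exists_forall_abs_sum_Ico_sub_le_half {a n : ℕ} {x : ℕ → K}
    (hstep : ∀ k ∈ Set.Ico a n, x k - x (k + 1) ∈ Set.Icc 0 1) (hlast : x n ∈ Set.Icc 0 (1 / 2)) :
    ∃ s : ℕ → ℕ, (∀ k, s k ≤ 1) ∧
      ∀ i ∈ Set.Icc a n, |∑ k ∈ Finset.Ico i n, (s k : K) - x i| ≤ 1 / 2 := by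
  have rounded_last : roundHalfDown (x n) = 0 :=
    roundHalfDown_eq_zero_iff.2 ⟨by linarith [hlast.1], hlast.2⟩
  obtain ⟨s, hs, hsum⟩ := exists_le_one_forall_sum_Ico_eq
    (fun k hk => roundHalfDown_sub_mem_Icc (hstep k hk)) rounded_last
  refine ⟨s, hs, fun i hi => ?_⟩
  have hsum_cast : ∑ k ∈ Finset.Ico i n, (s k : K) = roundHalfDown (x i) :=
    mod_cast congrArg (Int.cast : ℤ → K) (hsum i hi)
  exact hsum_cast ▸ abs_roundHalfDown_sub_le (x i)

theorem exists_forall_abs_mul_sum_Ico_sub_le {a n : ℕ} {c : K} (hc : 0 < c) {x : ℕ → K}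
    (hstep : ∀ k ∈ Set.Ico a n, x k - x (k + 1) ∈ Set.Icc 0 (2 * c)) (hlast : x n ∈ Set.Icc 0 c) :
    ∃ s : ℕ → ℕ, (∀ k, s k ≤ 1) ∧
      ∀ i ∈ Set.Icc a n, |c * (2 * ∑ k ∈ Finset.Ico i n, (s k : K)) - x i| ≤ c := by
  have h2c : 0 < 2 * c := by positivity
  obtain ⟨s, hs, happrox⟩ := exists_forall_abs_sum_Ico_sub_le_half
    (a := a) (n := n) (x := fun k => x k / (2 * c))
    (fun k hk => by
      rw [← sub_div]
      exact ⟨div_nonneg (hstep k hk).1 h2c.le, (div_le_one h2c).2 (hstep k hk).2⟩)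
    ⟨div_nonneg hlast.1 h2c.le, (div_le_iff₀ h2c).2 (by linarith [hlast.2])⟩
  have rescale (i : ℕ) : c * (2 * ∑ k ∈ Finset.Ico i n, (s k : K)) - x i
      = 2 * c * (∑ k ∈ Finset.Ico i n, (s k : K) - x i / (2 * c)) := by
    field_simp
  refine ⟨s, hs, fun i hi => ?_⟩
  calc |c * (2 * ∑ k ∈ Finset.Ico i n, (s k : K)) - x i|
      = 2 * c * |∑ k ∈ Finset.Ico i n, (s k : K) - x i / (2 * c)| := by
        rw [rescale i, abs_mul, abs_of_pos h2c]
    _ ≤ 2 * c * (1 / 2) := by gcongr; exact happrox i hi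
    _ = c := by ring

theorem exists_dominant_coweight_typeC_general (n : ℕ) {ℓ : K} (hℓ : 0 < ℓ) (lam : ℕ → K)
    (hstep : ∀ i : ℕ, 1 ≤ i → i ≤ n - 1 →
      0 ≤ lam i - lam (i + 1) ∧ lam i - lam (i + 1) ≤ 2 * ℓ)
    (hlast : 0 ≤ lam n ∧ lam n ≤ ℓ) :
    ∃ s : ℕ → ℕ, (∀ i, s i ≤ 1) ∧
      (∀ i j : ℕ, 1 ≤ i → i < j → j ≤ n →
        |(ℓ * (2 * ∑ k ∈ Finset.Icc i (n - 1), (s k : K)) - lam i) -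
          (ℓ * (2 * ∑ k ∈ Finset.Icc j (n - 1), (s k : K)) - lam j)| ≤ 2 * ℓ ∧
        |(ℓ * (2 * ∑ k ∈ Finset.Icc i (n - 1), (s k : K)) - lam i) +
          (ℓ * (2 * ∑ k ∈ Finset.Icc j (n - 1), (s k : K)) - lam j)| ≤ 2 * ℓ) ∧
      (∀ i : ℕ, 1 ≤ i → i ≤ n →
        |ℓ * (2 * ∑ k ∈ Finset.Icc i (n - 1), (s k : K)) - lam i| ≤ ℓ) := by
  obtain ⟨s, hs, hIco⟩ := exists_forall_abs_mul_sum_Ico_sub_le (a := 1) hℓ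
    (fun k hk => hstep k hk.1 (Nat.le_sub_one_of_lt hk.2)) hlast
  have long_root_bound : ∀ i : ℕ, 1 ≤ i → i ≤ n →
      |ℓ * (2 * ∑ k ∈ Finset.Icc i (n - 1), (s k : K)) - lam i| ≤ ℓ := by
    intro i hi hin
    have hIcc : Finset.Icc i (n - 1) = Finset.Ico i n :=
      Finset.Icc_sub_one_right_eq_Ico_of_not_isMin (not_isMin_of_lt (hi.trans hin)) i
    exact hIcc ▸ hIco i ⟨hi, hin⟩
  refine ⟨s, hs, fun i j hi hij hj => ?_, long_root_bound⟩
  have hvi := long_root_bound i hi (hij.le.trans hj)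
  have hvj := long_root_bound j (hi.trans hij.le) hj
  rw [two_mul ℓ]
  exact ⟨(abs_sub _ _).trans (add_le_add hvi hvj), (abs_add_le _ _).trans (add_le_add hvi hvj)⟩

end OrderedField

/-- Type `Cₙ` case of the key lemma: given `λ` with `0 ≤ λᵢ - λᵢ₊₁ ≤ 2ℓ` and
`0 ≤ λₙ ≤ ℓ`, there exist `s₁, …, s_{n-1} ∈ {0,1}` such that, with
`μₖ = 2(sₖ + ⋯ + s_{n-1})`, `μₙ = 0` and `v = ℓμ - λ`, one has
`|vᵢ - vⱼ| ≤ 2ℓ`, `|vᵢ + vⱼ| ≤ 2ℓ` for `i < j`, and `|vᵢ| ≤ ℓ`. -/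
theorem exists_dominant_coweight_typeC
    (n : ℕ) (hn : 1 ≤ n) (ℓ : ℕ) (hℓ : 0 < ℓ) (lam : ℕ → ℝ)
    (hstep : ∀ i : ℕ, 1 ≤ i → i ≤ n - 1 →
      0 ≤ lam i - lam (i + 1) ∧ lam i - lam (i + 1) ≤ 2 * ℓ)
    (hlast : 0 ≤ lam n ∧ lam n ≤ ℓ) :
    ∃ s : ℕ → ℕ, (∀ i, s i ≤ 1) ∧
      (∀ i j : ℕ, 1 ≤ i → i < j → j ≤ n →
        |((ℓ : ℝ) * (2 * ∑ k ∈ Finset.Icc i (n - 1), (s k : ℝ)) - lam i) -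
          ((ℓ : ℝ) * (2 * ∑ k ∈ Finset.Icc j (n - 1), (s k : ℝ)) - lam j)| ≤ 2 * ℓ ∧
        |((ℓ : ℝ) * (2 * ∑ k ∈ Finset.Icc i (n - 1), (s k : ℝ)) - lam i) +
          ((ℓ : ℝ) * (2 * ∑ k ∈ Finset.Icc j (n - 1), (s k : ℝ)) - lam j)| ≤ 2 * ℓ) ∧
      (∀ i : ℕ, 1 ≤ i → i ≤ n →
        |(ℓ : ℝ) * (2 * ∑ k ∈ Finset.Icc i (n - 1), (s k : ℝ)) - lam i| ≤ ℓ) :=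
  exists_dominant_coweight_typeC_general n (Nat.cast_pos.2 hℓ) lam hstep hlast
end

section
/- Let n ≥ 2, let ℓ be a positive real number, and let λ = (λ₁,…,λₙ) ∈ ℝⁿ satisfy 0 ≤ λᵢ − λᵢ₊₁ ≤ ℓ for 1 ≤ i ≤ n−1. Then there exist integers m₁ ≥ m₂ ≥ ⋯ ≥ mₙ = 0 with mᵢ − mᵢ₊₁ ∈ {0,1} for all 1 ≤ i ≤ n−1, such that |ℓ(mᵢ − mⱼ) − (λᵢ − λⱼ)| ≤ ℓ for all 1 ≤ i < j ≤ n. -/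
/-!
Take for `mᵢ` the integer quotient of `λᵢ - λₙ` by `ℓ`. Rounding down is monotone and commutes with
adding `ℓ`, so a step of `λ` in `[0, ℓ]` becomes a step of `m` in `{0, 1}`. The error
`ℓ(mᵢ - mⱼ) - (λᵢ - λⱼ)` is a difference of two remainders, which lie in a common half-open
interval of length `ℓ`.
-/

section IntegerQuotient

variable {G : Type*} [AddCommGroup G] [LinearOrder G] [IsOrderedAddMonoid G]

theorem abs_sub_lt_of_mem_Ico_add {a p x y : G}
    (hx : x ∈ Set.Ico a (a + p)) (hy : y ∈ Set.Ico a (a + p)) : |x - y| < p :=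
  abs_sub_lt_iff.2
    ⟨sub_lt_iff_lt_add'.2 (hx.2.trans_le (add_le_add_left hy.1 p)),
      sub_lt_iff_lt_add'.2 (hy.2.trans_le (add_le_add_left hx.1 p))⟩

variable [Archimedean G] {p : G} (hp : 0 < p)

theorem le_toIcoDiv_iff {a b : G} {k : ℤ} : k ≤ toIcoDiv hp a b ↔ a + k • p ≤ b := by
  obtain ⟨hle, hlt⟩ := sub_toIcoDiv_zsmul_mem_Ico hp a b
  constructor
  · intro hk
    calc a + k • p ≤ a + toIcoDiv hp a b • p := by gcongr
      _ ≤ b := le_sub_iff_add_le.1 hle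
  · intro hk
    have hlt_succ : a + k • p < a + (toIcoDiv hp a b + 1) • p :=
      calc a + k • p ≤ b := hk
        _ < a + p + toIcoDiv hp a b • p := sub_lt_iff_lt_add.1 hlt
        _ = a + (toIcoDiv hp a b + 1) • p := by rw [add_one_zsmul]; abel
    exact Int.lt_add_one_iff.1 ((zsmul_lt_zsmul_iff_left hp).1 (lt_of_add_lt_add_left hlt_succ))

theorem toIcoDiv_monotone (a : G) : Monotone (toIcoDiv hp a) := fun _ _ hbc =>
  (le_toIcoDiv_iff hp).2 (((le_toIcoDiv_iff hp).1 le_rfl).trans hbc)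

theorem toIcoDiv_sub_toIcoDiv_le_one {a b c : G} (hbc : b - c ≤ p) :
    toIcoDiv hp a b - toIcoDiv hp a c ≤ 1 := by
  rw [sub_le_iff_le_add', ← toIcoDiv_add_right]
  exact toIcoDiv_monotone hp a (sub_le_iff_le_add'.1 hbc)

theorem abs_toIcoDiv_sub_zsmul_sub_lt (a b c : G) :
    |(toIcoDiv hp a b - toIcoDiv hp a c) • p - (b - c)| < p := by
  have error_eq : (toIcoDiv hp a b - toIcoDiv hp a c) • p - (b - c) =
      toIcoMod hp a c - toIcoMod hp a b := by
    rw [sub_zsmul, ← self_sub_toIcoMod, ← self_sub_toIcoMod]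
    abel
  rw [error_eq]
  exact abs_sub_lt_of_mem_Ico_add (toIcoMod_mem_Ico hp a c) (toIcoMod_mem_Ico hp a b)

end IntegerQuotient

theorem exists_dominant_weight_typeA_general
    {G : Type*} [AddCommGroup G] [LinearOrder G] [IsOrderedAddMonoid G] [Archimedean G]
    {ℓ : G} (hℓ : 0 < ℓ) {ι : Type*} (o : ι) (lam : ι → G) :
    ∃ m : ι → ℤ, m o = 0 ∧
      (∀ i j, lam j ≤ lam i → m j ≤ m i) ∧
      (∀ i j, lam i - lam j ≤ ℓ → m i - m j ≤ 1) ∧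
      (∀ i j, |(m i - m j) • ℓ - (lam i - lam j)| < ℓ) :=
  ⟨fun i => toIcoDiv hℓ (lam o) (lam i), toIcoDiv_apply_left hℓ (lam o),
    fun _ _ hle => toIcoDiv_monotone hℓ (lam o) hle,
    fun _ _ hle => toIcoDiv_sub_toIcoDiv_le_one hℓ hle,
    fun i j => abs_toIcoDiv_sub_zsmul_sub_lt hℓ (lam o) (lam i) (lam j)⟩

/-- Type `A_{n-1}` case of the key lemma: given `λ` with `0 ≤ λᵢ - λᵢ₊₁ ≤ ℓ`,
there exist integers `m₁ ≥ ⋯ ≥ mₙ = 0` with steps in `{0,1}` such that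
`|ℓ(mᵢ - mⱼ) - (λᵢ - λⱼ)| ≤ ℓ` for all `i < j`. -/
theorem exists_dominant_weight_typeA
    (n : ℕ) (hn : 2 ≤ n) (ℓ : ℝ) (hℓ : 0 < ℓ) (lam : ℕ → ℝ)
    (hstep : ∀ i : ℕ, 1 ≤ i → i ≤ n - 1 →
      0 ≤ lam i - lam (i + 1) ∧ lam i - lam (i + 1) ≤ ℓ) :
    ∃ m : ℕ → ℤ, m n = 0 ∧
      (∀ i : ℕ, 1 ≤ i → i ≤ n - 1 → m (i + 1) ≤ m i ∧ m i - m (i + 1) ≤ 1) ∧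
      (∀ i j : ℕ, 1 ≤ i → i < j → j ≤ n →
        |ℓ * ((m i : ℝ) - (m j : ℝ)) - (lam i - lam j)| ≤ ℓ) := by
  obtain ⟨m, hm_zero, hm_mono, hm_step, hm_error⟩ :=
    exists_dominant_weight_typeA_general hℓ n lam
  exact ⟨m, hm_zero,
    fun i h1 hi => ⟨hm_mono _ _ (sub_nonneg.1 (hstep i h1 hi).1), hm_step _ _ (hstep i h1 hi).2⟩,
    fun i j _ _ _ => by simpa only [zsmul_eq_mul, Int.cast_sub, mul_comm] using (hm_error i j).le⟩
end

section
/- Let n ≥ 2, let ℓ be a positive real number, and let λ = (λ₁,…,λₙ) ∈ ℝⁿ satisfy 0 ≤ λᵢ − λᵢ₊₁ ≤ ℓ for 1 ≤ i ≤ n−1 and 0 ≤ λ_{n−1} + λₙ ≤ ℓ. Then there exists an integer vector μ = (μ₁,…,μₙ) ∈ ℤⁿ with μ₁ ≥ μ₂ ≥ ⋯ ≥ μ_{n−1} ≥ |μₙ| such that |ℓ(μᵢ − μⱼ) − (λᵢ − λⱼ)| ≤ ℓ and |ℓ(μᵢ + μⱼ) − (λᵢ + λⱼ)| ≤ ℓ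 for all 1 ≤ i < j ≤ n. -/
/-!
Take `μᵢ` to be the integer nearest to `λᵢ / ℓ`. Rounding is monotone and satisfies
`-round x ≤ round (-x)`, so it preserves the inequalities `|λᵢ₊₁| ≤ λᵢ` that express dominance.
Each coordinate of `ℓμ - λ` has absolute value at most `ℓ / 2`, so a sum or difference of two of
them has absolute value at most `ℓ`.
-/

section Rounding

variable {K : Type*} [Field K] [LinearOrder K] [IsStrictOrderedRing K] [FloorRing K]

theorem round_mono : Monotone (round : K → ℤ) := fun x y hxy => by
  simp only [round_eq]
  gcongr

theorem neg_round_le_round_neg (x : K) : -round x ≤ round (-x) := by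
  have hsum : (-1 : K) < round x + round (-x) := by
    linarith [sub_half_lt_round x, sub_half_lt_round (-x)]
  have hsum_int : -1 < round x + round (-x) := mod_cast hsum
  lia

theorem abs_round_le_round {x y : K} (h : |x| ≤ y) : |round x| ≤ round y :=
  abs_le'.2 ⟨round_mono (le_of_abs_le h),
    (neg_round_le_round_neg x).trans (round_mono (neg_le_of_neg_le (neg_le_of_abs_le h)))⟩

theorem abs_mul_round_div_sub_le {ℓ : K} (hℓ : 0 < ℓ) (x : K) :
    |ℓ * round (x / ℓ) - x| ≤ ℓ / 2 :=
  calc |ℓ * round (x / ℓ) - x| = |ℓ * (round (x / ℓ) - x / ℓ)| := by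
        rw [mul_sub, mul_div_cancel₀ x hℓ.ne']
    _ = ℓ * |x / ℓ - round (x / ℓ)| := by rw [abs_mul, abs_of_pos hℓ, abs_sub_comm]
    _ ≤ ℓ * (1 / 2) := by gcongr; exact abs_sub_round _
    _ = ℓ / 2 := by ring

end Rounding

/-- Dominance of the vector `(v 1, …, v n)` for the root system `Dₙ`. For `2 ≤ n` the inequalities
are equivalent to `v 1 ≥ ⋯ ≥ v (n - 1) ≥ |v n|`; the uniform shape `|v (i + 1)| ≤ v i` says that
`v` pairs nonnegatively with the two roots `eᵢ ± eᵢ₊₁`. -/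
def IsDominantTypeD {R : Type*} [AddCommGroup R] [LinearOrder R] (n : ℕ) (v : ℕ → R) : Prop :=
  ∀ i, 1 ≤ i → i < n → |v (i + 1)| ≤ v i

section SimpleRoots

variable {R : Type*} [AddCommGroup R] [LinearOrder R] {n : ℕ} {v : ℕ → R}

theorem IsDominantTypeD.abs_last_le (hv : IsDominantTypeD n v) (hn : 2 ≤ n) :
    |v n| ≤ v (n - 1) := by
  simpa only [Nat.sub_add_cancel (one_le_two.trans hn)] using hv (n - 1) (by lia) (by lia)

theorem isDominantTypeD_iff_simple_roots_nonneg [IsOrderedAddMonoid R] (hn : 2 ≤ n) :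
    IsDominantTypeD n v ↔
      (∀ i, 1 ≤ i → i ≤ n - 1 → 0 ≤ v i - v (i + 1)) ∧ 0 ≤ v (n - 1) + v n := by
  constructor
  · intro hv
    exact ⟨fun i hi hin => sub_nonneg.2 (le_of_abs_le (hv i hi (by lia))),
      neg_le_iff_add_nonneg.1 (abs_le'.1 (hv.abs_last_le hn)).2⟩
  · rintro ⟨hstep, hlast⟩ i hi hin
    obtain ⟨m, rfl⟩ := Nat.exists_eq_add_of_le' hn
    replace hin : i ≤ m + 1 := by lia
    induction hin using Nat.decreasingInduction with
    | self =>
      exact abs_le'.2 ⟨sub_nonneg.1 (hstep (m + 1) hi le_rfl), neg_le_iff_add_nonneg.2 hlast⟩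
    | of_succ k hk ih =>
      have hnonneg : 0 ≤ v (k + 1) := (abs_nonneg _).trans (ih (by lia))
      rw [abs_of_nonneg hnonneg]
      exact sub_nonneg.1 (hstep k hi hk.le)

end SimpleRoots

section Field

variable {K : Type*} [Field K] [LinearOrder K] [IsStrictOrderedRing K] {n : ℕ} {ℓ : K}

theorem IsDominantTypeD.div_const {v : ℕ → K} (hv : IsDominantTypeD n v) (hℓ : 0 < ℓ) :
    IsDominantTypeD n (fun i => v i / ℓ) := fun i hi hin => by
  rw [abs_div, abs_of_pos hℓ]
  exact div_le_div_of_nonneg_right (hv i hi hin) hℓ.le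

variable [FloorRing K]

theorem IsDominantTypeD.round {v : ℕ → K} (hv : IsDominantTypeD n v) :
    IsDominantTypeD n (fun i => round (v i)) :=
  fun i hi hin => abs_round_le_round (hv i hi hin)

theorem exists_dominant_weight_typeD_general (hℓ : 0 < ℓ) {lam : ℕ → K}
    (hlam : IsDominantTypeD n lam) :
    ∃ μ : ℕ → ℤ, IsDominantTypeD n μ ∧ ∀ i j : ℕ,
      |ℓ * ((μ i : K) - (μ j : K)) - (lam i - lam j)| ≤ ℓ ∧
      |ℓ * ((μ i : K) + (μ j : K)) - (lam i + lam j)| ≤ ℓ := by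
  refine ⟨fun i => round (lam i / ℓ), (hlam.div_const hℓ).round, fun i j => ?_⟩
  have hsum : |ℓ * round (lam i / ℓ) - lam i| + |ℓ * round (lam j / ℓ) - lam j| ≤ ℓ :=
    (add_le_add (abs_mul_round_div_sub_le hℓ _) (abs_mul_round_div_sub_le hℓ _)).trans_eq
      (add_halves ℓ)
  rw [mul_sub, mul_add, sub_sub_sub_comm, add_sub_add_comm]
  exact ⟨(abs_sub _ _).trans hsum, (abs_add_le _ _).trans hsum⟩

end Field

/-- Type `Dₙ` case of the key lemma: given `λ` with `0 ≤ λᵢ - λᵢ₊₁ ≤ ℓ` for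
`1 ≤ i ≤ n-1` and `0 ≤ λ_{n-1} + λₙ ≤ ℓ`, there exists a dominant integral
vector `μ₁ ≥ ⋯ ≥ μ_{n-1} ≥ |μₙ|` with `|ℓ(μᵢ ∓ μⱼ) - (λᵢ ∓ λⱼ)| ≤ ℓ` for `i < j`. -/
theorem exists_dominant_weight_typeD
    (n : ℕ) (hn : 2 ≤ n) (ℓ : ℝ) (hℓ : 0 < ℓ) (lam : ℕ → ℝ)
    (hstep : ∀ i : ℕ, 1 ≤ i → i ≤ n - 1 →
      0 ≤ lam i - lam (i + 1) ∧ lam i - lam (i + 1) ≤ ℓ)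
    (hlast : 0 ≤ lam (n - 1) + lam n ∧ lam (n - 1) + lam n ≤ ℓ) :
    ∃ μ : ℕ → ℤ,
      (∀ i : ℕ, 1 ≤ i → i ≤ n - 2 → μ (i + 1) ≤ μ i) ∧
      |μ n| ≤ μ (n - 1) ∧
      (∀ i j : ℕ, 1 ≤ i → i < j → j ≤ n →
        |ℓ * ((μ i : ℝ) - (μ j : ℝ)) - (lam i - lam j)| ≤ ℓ ∧
        |ℓ * ((μ i : ℝ) + (μ j : ℝ)) - (lam i + lam j)| ≤ ℓ) := by
  obtain ⟨μ, hμ, happrox⟩ := exists_dominant_weight_typeD_general hℓ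
    ((isDominantTypeD_iff_simple_roots_nonneg hn).2
      ⟨fun i hi hin => (hstep i hi hin).1, hlast.1⟩)
  exact ⟨μ, fun i hi hin => le_of_abs_le (hμ i hi (by lia)), hμ.abs_last_le hn,
    fun i j _ _ _ => happrox i j⟩
end

section
/- Let n ≥ 1, let ℓ be a positive real number, and let λ = (λ₁,…,λₙ) ∈ ℝⁿ satisfy 0 ≤ λᵢ − λᵢ₊₁ ≤ ℓ for 1 ≤ i ≤ n−1 and 0 ≤ λₙ ≤ ℓ. Then there exists an integer vector μ = (μ₁,…,μₙ) ∈ ℤⁿ with μ₁ ≥ μ₂ ≥ ⋯ ≥ μₙ ≥ 0 such that |ℓ(μᵢ − μⱼ) − (λᵢ − λⱼ)| ≤ ℓ and |ℓ(μᵢ + μⱼ) − (λᵢ + λⱼ)| ≤ ℓ for all 1 ≤ i < j ≤ n, and |ℓμᵢ − λᵢ| ≤ ℓ for all 1 ≤ i ≤ n. -/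
/-!
Rounding every coordinate of `λ / ℓ` to a nearest integer moves each `λᵢ` by at most `ℓ / 2` and
preserves the order of the coordinates as well as their nonnegativity. A root of type `Bₙ` involves
at most two coordinates, with coefficients `±1`, so pairing with it accumulates an error of at
most `ℓ`.
-/

section Ring

variable {R : Type*} [Ring R] [LinearOrder R] [IsStrictOrderedRing R] [FloorRing R]

theorem monotone_round : Monotone (round : R → ℤ) := by
  intro x y hxy
  rw [round_eq_div, round_eq_div]
  refine Int.ediv_le_ediv two_pos ?_
  gcongr

theorem round_nonneg {x : R} (hx : 0 ≤ x) : 0 ≤ round x := by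
  simpa only [round_zero] using monotone_round hx

end Ring

section Field

variable {K : Type*} [Field K] [LinearOrder K] [IsStrictOrderedRing K] [FloorRing K]

theorem exists_dominant_weight_typeB_general {ι : Type*} {ℓ : K} (hℓ : 0 < ℓ) (lam : ι → K) :
    ∃ μ : ι → ℤ,
      (∀ i j, lam i ≤ lam j → μ i ≤ μ j) ∧
      (∀ i, 0 ≤ lam i → 0 ≤ μ i) ∧
      (∀ i j,
        |ℓ * ((μ i : K) - (μ j : K)) - (lam i - lam j)| ≤ ℓ ∧
        |ℓ * ((μ i : K) + (μ j : K)) - (lam i + lam j)| ≤ ℓ) ∧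
      (∀ i, |ℓ * (μ i : K) - lam i| ≤ ℓ) := by
  let μ (i : ι) : ℤ := round (lam i / ℓ)
  have error_le (i : ι) : |ℓ * μ i - lam i| ≤ ℓ / 2 := abs_mul_round_div_sub_le hℓ (lam i)
  refine ⟨μ, fun i j hij ↦ monotone_round (by gcongr),
    fun i hi ↦ round_nonneg (div_nonneg hi hℓ.le), fun i j ↦ ⟨?_, ?_⟩,
    fun i ↦ (error_le i).trans (half_le_self hℓ.le)⟩
  · calc |ℓ * ((μ i : K) - μ j) - (lam i - lam j)|
        = |(ℓ * μ i - lam i) - (ℓ * μ j - lam j)| := by rw [mul_sub, sub_sub_sub_comm]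
      _ ≤ |ℓ * μ i - lam i| + |ℓ * μ j - lam j| := abs_sub _ _
      _ ≤ ℓ / 2 + ℓ / 2 := add_le_add (error_le i) (error_le j)
      _ = ℓ := add_halves ℓ
  · calc |ℓ * ((μ i : K) + μ j) - (lam i + lam j)|
        = |(ℓ * μ i - lam i) + (ℓ * μ j - lam j)| := by rw [mul_add, add_sub_add_comm]
      _ ≤ |ℓ * μ i - lam i| + |ℓ * μ j - lam j| := abs_add_le _ _
      _ ≤ ℓ / 2 + ℓ / 2 := add_le_add (error_le i) (error_le j)
      _ = ℓ := add_halves ℓ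

end Field

/-- Type `Bₙ` case of the key lemma: given `λ` with `0 ≤ λᵢ - λᵢ₊₁ ≤ ℓ` for
`1 ≤ i ≤ n-1` and `0 ≤ λₙ ≤ ℓ`, there exists a dominant integral vector
`μ₁ ≥ ⋯ ≥ μₙ ≥ 0` with `|ℓ(μᵢ ∓ μⱼ) - (λᵢ ∓ λⱼ)| ≤ ℓ` for `i < j`,
and `|ℓμᵢ - λᵢ| ≤ ℓ` for all `i`. -/
theorem exists_dominant_weight_typeB
    (n : ℕ) (hn : 1 ≤ n) (ℓ : ℝ) (hℓ : 0 < ℓ) (lam : ℕ → ℝ)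
    (hstep : ∀ i : ℕ, 1 ≤ i → i ≤ n - 1 →
      0 ≤ lam i - lam (i + 1) ∧ lam i - lam (i + 1) ≤ ℓ)
    (hlast : 0 ≤ lam n ∧ lam n ≤ ℓ) :
    ∃ μ : ℕ → ℤ,
      (∀ i : ℕ, 1 ≤ i → i ≤ n - 1 → μ (i + 1) ≤ μ i) ∧
      0 ≤ μ n ∧
      (∀ i j : ℕ, 1 ≤ i → i < j → j ≤ n →
        |ℓ * ((μ i : ℝ) - (μ j : ℝ)) - (lam i - lam j)| ≤ ℓ ∧
        |ℓ * ((μ i : ℝ) + (μ j : ℝ)) - (lam i + lam j)| ≤ ℓ) ∧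
      (∀ i : ℕ, 1 ≤ i → i ≤ n → |ℓ * (μ i : ℝ) - lam i| ≤ ℓ) := by
  obtain ⟨μ, monotone, nonneg, pair, single⟩ := exists_dominant_weight_typeB_general hℓ lam
  exact ⟨μ, fun i hi hin ↦ monotone _ _ (sub_nonneg.mp (hstep i hi hin).1), nonneg n hlast.1,
    fun i j _ _ _ ↦ pair i j, fun i _ _ ↦ single i⟩
end

section
/- Let ℓ be a positive integer and let x, y be real numbers with 0 ≤ x ≤ ℓ and 0 ≤ y ≤ ℓ. Then there exist a, b ∈ {0,1} such that for every pair (c,d) in the set {(1,0), (0,1), (1,1), (1,2), (1,3), (2,3)} one has |ℓ(c·a + d·b) − (c·x + d·y)| ≤ ℓ. -/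
/-!
Put `u = ℓa - x` and `v = ℓb - y`; the claim is that `(u, v)` pairs to at most `ℓ` in absolute value
with every positive root. The reflection `(x, y, a, b) ↦ (ℓ - x, ℓ - y, 1 - a, 1 - b)` replaces
`(u, v)` by `(-u, -v)`, so one may assume `x + 3y ≤ 2ℓ`. Then `(a, b) = (0, 0)` works if
`2x + 3y ≤ ℓ`, since the highest root dominates on the dominant chamber, and `(a, b) = (1, 0)` works
otherwise, since for `0 ≤ u` and `v ≤ 0` only the pairings with `α₁`, `α₁ + 3α₂` and `2α₁ + 3α₂`
impose conditions.
-/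

/-- The positive roots of `G₂`, with `(c, d)` standing for `c α₁ + d α₂`, where `α₁` is the long and
`α₂` the short simple root. -/
def positiveRootsG2 : Set (ℕ × ℕ) :=
  {(1, 0), (0, 1), (1, 1), (1, 2), (1, 3), (2, 3)}

section

variable {K : Type*} [CommRing K] [LinearOrder K]

/-- The weight whose pairings with the simple roots `α₁`, `α₂` of `G₂` are `u`, `v` pairs with every
positive root to a value in `[-ℓ, ℓ]`. It is applied to the difference `ℓμ - λ`, whose coordinates
are `u = ℓa - x` and `v = ℓb - y`. -/
def RootBoundedG2 (ℓ u v : K) : Prop :=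
  ∀ c d : ℕ, (c, d) ∈ positiveRootsG2 → |(c : K) * u + (d : K) * v| ≤ ℓ

variable {ℓ u v x y : K}

theorem rootBoundedG2_iff :
    RootBoundedG2 ℓ u v ↔
      |u| ≤ ℓ ∧ |v| ≤ ℓ ∧ |u + v| ≤ ℓ ∧ |u + 2 * v| ≤ ℓ ∧ |u + 3 * v| ≤ ℓ ∧
        |2 * u + 3 * v| ≤ ℓ := by
  simp [RootBoundedG2, positiveRootsG2, or_imp, forall_and]

theorem RootBoundedG2.neg (h : RootBoundedG2 ℓ u v) : RootBoundedG2 ℓ (-u) (-v) := by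
  intro c d hcd
  rw [mul_neg, mul_neg, ← neg_add, abs_neg]
  exact h c d hcd

theorem RootBoundedG2.reflect {a b : ℕ} (ha : a ≤ 1) (hb : b ≤ 1)
    (h : RootBoundedG2 ℓ (ℓ * a - (ℓ - x)) (ℓ * b - (ℓ - y))) :
    RootBoundedG2 ℓ (ℓ * (1 - a : ℕ) - x) (ℓ * (1 - b : ℕ) - y) := by
  convert h.neg using 1 <;> push_cast [ha, hb] <;> ring

variable [IsStrictOrderedRing K]

theorem rootBoundedG2_of_nonneg (hu : 0 ≤ u) (hv : 0 ≤ v) (h : 2 * u + 3 * v ≤ ℓ) :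
    RootBoundedG2 ℓ u v := by
  simp only [rootBoundedG2_iff, abs_le]
  refine ⟨?_, ?_, ?_, ?_, ?_, ?_⟩ <;> constructor <;> linarith

theorem rootBoundedG2_of_nonneg_of_nonpos (hu : 0 ≤ u) (hv : v ≤ 0) (huℓ : u ≤ ℓ)
    (hlower : -ℓ ≤ u + 3 * v) (hupper : 2 * u + 3 * v ≤ ℓ) : RootBoundedG2 ℓ u v := by
  simp only [rootBoundedG2_iff, abs_le]
  refine ⟨?_, ?_, ?_, ?_, ?_, ?_⟩ <;> constructor <;> linarith

theorem exists_rootBoundedG2_of_add_three_mul_le (hx : 0 ≤ x) (hxℓ : x ≤ ℓ) (hy : 0 ≤ y)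
    (h : x + 3 * y ≤ 2 * ℓ) :
    ∃ a b : ℕ, a ≤ 1 ∧ b ≤ 1 ∧ RootBoundedG2 ℓ (ℓ * a - x) (ℓ * b - y) := by
  rcases le_total (2 * x + 3 * y) ℓ with hsmall | hlarge
  · refine ⟨0, 0, zero_le_one, zero_le_one, ?_⟩
    simpa using (rootBoundedG2_of_nonneg hx hy hsmall).neg
  · refine ⟨1, 0, le_rfl, zero_le_one, ?_⟩
    have hbounded : RootBoundedG2 ℓ (ℓ - x) (-y) := by
      apply rootBoundedG2_of_nonneg_of_nonpos <;> linarith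
    simpa using hbounded

theorem exists_rootBoundedG2 (hx : 0 ≤ x ∧ x ≤ ℓ) (hy : 0 ≤ y ∧ y ≤ ℓ) :
    ∃ a b : ℕ, a ≤ 1 ∧ b ≤ 1 ∧ RootBoundedG2 ℓ (ℓ * a - x) (ℓ * b - y) := by
  rcases le_total (x + 3 * y) (2 * ℓ) with hlow | hhigh
  · exact exists_rootBoundedG2_of_add_three_mul_le hx.1 hx.2 hy.1 hlow
  · obtain ⟨a, b, ha, hb, hab⟩ :=
      exists_rootBoundedG2_of_add_three_mul_le (sub_nonneg.2 hx.2) (sub_le_self ℓ hx.1)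
        (sub_nonneg.2 hy.2) (by linarith)
    exact ⟨1 - a, 1 - b, Nat.sub_le 1 a, Nat.sub_le 1 b, hab.reflect ha hb⟩

theorem exists_dominant_coweight_G2_general (hx : 0 ≤ x ∧ x ≤ ℓ) (hy : 0 ≤ y ∧ y ≤ ℓ) :
    ∃ a b : ℕ, a ≤ 1 ∧ b ≤ 1 ∧ ∀ c d : ℕ, (c, d) ∈ positiveRootsG2 →
      |ℓ * ((c : K) * a + (d : K) * b) - ((c : K) * x + (d : K) * y)| ≤ ℓ := by
  obtain ⟨a, b, ha, hb, hab⟩ := exists_rootBoundedG2 hx hy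
  refine ⟨a, b, ha, hb, fun c d hcd ↦ ?_⟩
  convert hab c d hcd using 2
  ring

end

/-- The `G₂` case of the key lemma: for `0 ≤ x, y ≤ ℓ` there exist `a, b ∈ {0,1}` with
`|ℓ(c·a + d·b) - (c·x + d·y)| ≤ ℓ` for each of the six pairs `(c,d)` corresponding to
the positive roots of `G₂`. -/
theorem exists_dominant_coweight_G2
    (ℓ : ℕ) (hℓ : 0 < ℓ) (x y : ℝ)
    (hx : 0 ≤ x ∧ x ≤ ℓ) (hy : 0 ≤ y ∧ y ≤ ℓ) :
    ∃ a b : ℕ, a ≤ 1 ∧ b ≤ 1 ∧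
      ∀ c d : ℕ, (c, d) ∈ ({(1, 0), (0, 1), (1, 1), (1, 2), (1, 3), (2, 3)} : Set (ℕ × ℕ)) →
        |(ℓ : ℝ) * ((c : ℝ) * a + (d : ℝ) * b) - ((c : ℝ) * x + (d : ℝ) * y)| ≤ ℓ :=
  exists_dominant_coweight_G2_general hx hy
end
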